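/- Let Ω ⊆ ℂ be a domain and let K and L be two Ω-convex compact subsets of Ω. If K ⊆ ℂ ∖ L̂ and L ⊆ ℂ ∖ K̂ (where K̂ and L̂ denote the polynomial hulls), then K ∪ L is Ω-convex. -/

import Mathlib

open Set Metric Bornology Filter

/-- A *hole* of `E` is a nonempty bounded connected component of `ℂ \ E`. -/
def IsHole (E C : Set ℂ) : Prop :=
  (∃ z ∈ Eᶜ, C = connectedComponentIn Eᶜ z) ∧ Bornology.IsBounded C

/-- A compact set `K` contained in an open set `Ω` is `Ω`-*convex* if every hole of `K`
contains a point of `ℂ \ Ω`. -/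
def OmegaConvex (Ω K : Set ℂ) : Prop :=
  ∀ C : Set ℂ, IsHole K C → (C ∩ Ωᶜ).Nonempty

/-- The *polynomial hull* of `K`: the union of `K` and all of its holes. -/
def polyHull (K : Set ℂ) : Set ℂ :=
  K ∪ {z | z ∈ Kᶜ ∧ Bornology.IsBounded (connectedComponentIn Kᶜ z)}

/-- A sequence of maps is *eventually injective* on `G`: for every compact `K ⊆ G`, the maps
are eventually injective on a neighbourhood of `K` in `G`. -/
def EventuallyInjective (G : Set ℂ) (φ : ℕ → ℂ → ℂ) : Prop :=
  ∀ K : Set ℂ, K ⊆ G → IsCompact K →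
    ∃ N : ℕ, ∀ n ≥ N, ∃ U : Set ℂ, IsOpen U ∧ K ⊆ U ∧ U ⊆ G ∧ Set.InjOn (φ n) U

/-- `f` is `(Φ, G, Ω)`-*universal*: the family `{f ∘ φ n : n ∈ ℕ}` is dense in `H(G)` for the
topology of locally uniform convergence, i.e. every `g` holomorphic on `G` can be approximated
uniformly on every compact subset of `G` by functions `f ∘ φ n`. -/
def UniversalFor (G : Set ℂ) (φ : ℕ → ℂ → ℂ) (f : ℂ → ℂ) : Prop :=
  ∀ g : ℂ → ℂ, DifferentiableOn ℂ g G →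
    ∀ K : Set ℂ, K ⊆ G → IsCompact K → ∀ ε : ℝ, 0 < ε →
      ∃ n : ℕ, ∀ z ∈ K, ‖f (φ n z) - g z‖ < ε

/-- `E` has no hole (for a domain: simple connectivity). -/
def HasNoHole (E : Set ℂ) : Prop := ¬ ∃ C : Set ℂ, IsHole E C

/-- A *Jordan curve*: the image of the unit circle under an injective continuous map. -/
def IsJordanCurve (C : Set ℂ) : Prop :=
  ∃ γ : ℂ → ℂ, ContinuousOn γ (Metric.sphere 0 1) ∧ Set.InjOn γ (Metric.sphere 0 1) ∧
    C = γ '' Metric.sphere 0 1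

/-- A *Jordan arc*: the image of `[0,1]` under an injective continuous map. -/
def IsJordanArc (C : Set ℂ) : Prop :=
  ∃ γ : ℝ → ℂ, ContinuousOn γ (Set.Icc 0 1) ∧ Set.InjOn γ (Set.Icc 0 1) ∧
    C = γ '' Set.Icc 0 1

/-- A compact set is *regular* if its boundary is a union of Jordan curves. -/
def RegularCompact (K : Set ℂ) : Prop :=
  ∃ 𝒞 : Set (Set ℂ), (∀ C ∈ 𝒞, IsJordanCurve C) ∧ frontier K = ⋃₀ 𝒞

/-- `K` is `Ω`-*connected*: it has no hole if `Ω` is simply connected, and has at least one hole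
if `Ω` is not simply connected. -/
def OmegaConnectedSet (Ω K : Set ℂ) : Prop :=
  (HasNoHole Ω → HasNoHole K) ∧ (¬ HasNoHole Ω → ∃ C : Set ℂ, IsHole K C)

/-- Membership in the family `M(Ω)` of nonempty compact subsets of `Ω` that are regular,
connected, `Ω`-connected and `Ω`-convex. -/
def MemM (Ω K : Set ℂ) : Prop :=
  K.Nonempty ∧ IsCompact K ∧ K ⊆ Ω ∧ RegularCompact K ∧ IsConnected K ∧
    OmegaConnectedSet Ω K ∧ OmegaConvex Ω K

/-- `f` is `(Φ, M)`-*universal*: for every `K ∈ M`, the restrictions of the `f ∘ φ n` to `K`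
are dense in `C(K)`. -/
def MUniversal (M : Set (Set ℂ)) (φ : ℕ → ℂ → ℂ) (f : ℂ → ℂ) : Prop :=
  ∀ K ∈ M, ∀ h : ℂ → ℂ, ContinuousOn h K → ∀ ε : ℝ, 0 < ε →
    ∃ n : ℕ, ∀ z ∈ K, ‖f (φ n z) - h z‖ < ε

def HasLog (A : Set ℂ) (p : ℂ) : Prop :=
  ∃ g : ℂ → ℂ, ContinuousOn g A ∧ ∀ z ∈ A, Complex.exp (g z) = z - p

lemma slit_aux {w : ℂ} (hw : ‖w‖ < 1) : 1 - w ∈ Complex.slitPlane := by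
  have := Complex.mem_slitPlane_of_norm_lt_one (z := -w) (by simpa using hw)
  simpa [sub_eq_add_neg] using this

lemma HasLog.move {A : Set ℂ} {p q : ℂ} (h : HasLog A p)
    (hlt : ∀ z ∈ A, ‖q - p‖ < ‖z - p‖) : HasLog A q := by
  obtain ⟨g, hg, he⟩ := h
  have hne : ∀ z ∈ A, z - p ≠ 0 := fun z hz h0 => by
    have := hlt z hz
    rw [h0, norm_zero] at this
    exact absurd this (not_lt.2 (norm_nonneg _))
  have hsl : ∀ z ∈ A, 1 - (q - p) / (z - p) ∈ Complex.slitPlane := fun z hz => by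
    apply slit_aux
    rw [norm_div, div_lt_one (norm_pos_iff.2 (hne z hz))]
    exact hlt z hz
  refine ⟨fun z => g z + Complex.log (1 - (q - p) / (z - p)), ?_, ?_⟩
  · refine hg.add (ContinuousOn.clog ?_ hsl)
    exact continuousOn_const.sub (continuousOn_const.div (by fun_prop) hne)
  · intro z hz
    rw [Complex.exp_add, he z hz, Complex.exp_log (Complex.slitPlane_ne_zero (hsl z hz))]
    have := hne z hz
    field_simp
    ring

lemma HasLog.move' {A : Set ℂ} {p q : ℂ} (h : HasLog A q)
    (hlt : ∀ z ∈ A, ‖q - p‖ < ‖z - p‖) : HasLog A p := by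
  obtain ⟨g, hg, he⟩ := h
  have hne : ∀ z ∈ A, z - p ≠ 0 := fun z hz h0 => by
    have := hlt z hz
    rw [h0, norm_zero] at this
    exact absurd this (not_lt.2 (norm_nonneg _))
  have hsl : ∀ z ∈ A, 1 - (q - p) / (z - p) ∈ Complex.slitPlane := fun z hz => by
    apply slit_aux
    rw [norm_div, div_lt_one (norm_pos_iff.2 (hne z hz))]
    exact hlt z hz
  refine ⟨fun z => g z - Complex.log (1 - (q - p) / (z - p)), ?_, ?_⟩
  · refine hg.sub (ContinuousOn.clog ?_ hsl)
    exact continuousOn_const.sub (continuousOn_const.div (by fun_prop) hne)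
  · intro z hz
    have h0 := Complex.slitPlane_ne_zero (hsl z hz)
    rw [Complex.exp_sub, he z hz, Complex.exp_log h0, div_eq_iff h0]
    have := hne z hz
    field_simp
    ring

lemma hasLog_far {A : Set ℂ} {p : ℂ} (h : ∀ z ∈ A, ‖z‖ < ‖p‖) : HasLog A p := by
  rcases A.eq_empty_or_nonempty with rfl | ⟨a, ha⟩
  · exact ⟨fun _ => 0, by simp, by simp⟩
  have hp : p ≠ 0 := norm_pos_iff.1 ((norm_nonneg a).trans_lt (h a ha))
  have hsl : ∀ z ∈ A, 1 - z / p ∈ Complex.slitPlane := fun z hz => by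
    apply slit_aux
    rw [norm_div, div_lt_one (norm_pos_iff.2 hp)]
    exact h z hz
  refine ⟨fun z => Complex.log (-p) + Complex.log (1 - z / p), ?_, ?_⟩
  · exact continuousOn_const.add (ContinuousOn.clog (by fun_prop) hsl)
  · intro z hz
    rw [Complex.exp_add, Complex.exp_log (neg_ne_zero.2 hp),
      Complex.exp_log (Complex.slitPlane_ne_zero (hsl z hz))]
    field_simp
    ring

lemma hasLog_of_unbounded {A : Set ℂ} (hA : IsCompact A) {p : ℂ} (hp : p ∈ Aᶜ)
    (hub : ¬ Bornology.IsBounded (connectedComponentIn Aᶜ p)) : HasLog A p := by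
  obtain ⟨R, hR⟩ := hA.isBounded.exists_norm_le
  obtain ⟨q, hq, hqR⟩ : ∃ q ∈ connectedComponentIn Aᶜ p, R < ‖q‖ := by
    by_contra! hcon
    exact hub (isBounded_iff_forall_norm_le.2 ⟨R, hcon⟩)
  have key := isPreconnected_connectedComponentIn.induction₂ (s := connectedComponentIn Aᶜ p)
    (fun a b => HasLog A a ↔ HasLog A b) ?_ (fun _ _ _ _ _ _ h h' => h.trans h')
    (fun _ _ _ _ h => h.symm) (mem_connectedComponentIn hp) hq
  · exact key.2 (hasLog_far fun z hz => (hR z hz).trans_lt hqR)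
  · intro x hx
    have hxA : x ∈ Aᶜ := connectedComponentIn_subset _ _ hx
    obtain ⟨d, hd, hball⟩ := Metric.isOpen_iff.1 hA.isClosed.isOpen_compl x hxA
    refine mem_nhdsWithin_of_mem_nhds (Filter.mem_of_superset (Metric.ball_mem_nhds x hd) ?_)
    intro y hy
    have hlt : ∀ z ∈ A, ‖y - x‖ < ‖z - x‖ := fun z hz => by
      by_contra! hcon
      have hzb : z ∈ Metric.ball x d := by
        rw [Metric.mem_ball, dist_eq_norm] at *
        exact hcon.trans_lt hy
      exact hball hzb hz
    exact ⟨fun h => h.move hlt, fun h => h.move' hlt⟩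

lemma frontier_comp_subset {A : Set ℂ} (hA : IsClosed A) (p : ℂ) :
    frontier (connectedComponentIn Aᶜ p) ⊆ A := by
  intro x hx
  by_contra hxA
  have hop : IsOpen (connectedComponentIn Aᶜ p) := hA.isOpen_compl.connectedComponentIn
  have hopx : IsOpen (connectedComponentIn Aᶜ x) := hA.isOpen_compl.connectedComponentIn
  rw [hop.frontier_eq] at hx
  obtain ⟨y, hy1, hy2⟩ := mem_closure_iff.1 hx.1 _ hopx (mem_connectedComponentIn hxA)
  apply hx.2
  rw [connectedComponentIn_eq hy2, ← connectedComponentIn_eq hy1]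
  exact mem_connectedComponentIn hxA

lemma not_hasLog_of_bounded {A : Set ℂ} (hA : IsClosed A) {p : ℂ} (hp : p ∈ Aᶜ)
    (hb : Bornology.IsBounded (connectedComponentIn Aᶜ p)) : ¬ HasLog A p := by
  classical
  rintro ⟨g, hg, he⟩
  obtain ⟨G, hG⟩ := ContinuousMap.exists_restrict_eq hA ⟨A.domRestrict g, hg.domRestrict⟩
  have hGg : ∀ z ∈ A, G z = g z := fun z hz => by
    have := DFunLike.congr_fun hG ⟨z, hz⟩
    exact this
  set C := connectedComponentIn Aᶜ p with hC
  have hpC : p ∈ C := mem_connectedComponentIn hp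
  have hFc : Continuous (C.piecewise (fun z => Complex.exp (G z)) (fun z => z - p)) := by
    refine Continuous.piecewise ?_ (by fun_prop) (by fun_prop)
    intro a ha
    have haA := frontier_comp_subset hA p ha
    simp only [hGg a haA, he a haA]
  have hF0 : ∀ z, C.piecewise (fun z => Complex.exp (G z)) (fun z => z - p) z ≠ 0 := by
    intro z
    by_cases hz : z ∈ C
    · simp [hz]
    · simp only [hz, not_false_eq_true, piecewise_eq_of_notMem]
      intro h
      rw [sub_eq_zero.1 h] at hz
      exact hz hpC
  obtain ⟨f, hf⟩ : ∃ f : ℂ → ℂ, Continuous f ∧ ∀ z, Complex.exp (f z) =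
      C.piecewise (fun z => Complex.exp (G z)) (fun z => z - p) z := by
    haveI := (convex_univ (𝕜 := ℝ) (E := ℂ)).contractibleSpace univ_nonempty
    have hsc : IsSimplyConnected (univ : Set ℂ) :=
      (inferInstance : SimplyConnectedSpace (univ : Set ℂ))
    obtain ⟨f, hf, hfe⟩ := Complex.exists_continuousOn_eqOn_exp_comp (U := (univ : Set ℂ))
      hsc isOpen_univ hFc.continuousOn
      (by rintro ⟨z, -, hz⟩; exact hF0 z hz)
    exact ⟨f, continuousOn_univ.1 hf, fun z => hfe (mem_univ z)⟩
  obtain ⟨hfc, hfe⟩ := hf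
  obtain ⟨R, hR0, hR⟩ := hb.subset_ball_lt 0 p
  let h : ℝ → ℂ := fun t => f (p + R * Complex.exp (t * Complex.I)) - t * Complex.I
  have hhc : Continuous h := by fun_prop
  have hhe : ∀ t, Complex.exp (h t) = R := fun t => by
    have hn : p + R * Complex.exp (t * Complex.I) ∉ C := fun hmem => by
      have := hR hmem
      rw [Metric.mem_ball, dist_eq_norm, add_sub_cancel_left, norm_mul,
        Complex.norm_exp_ofReal_mul_I, Complex.norm_real, Real.norm_of_nonneg hR0.le] at this
      linarith
    simp only [h, Complex.exp_sub, hfe]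
    rw [piecewise_eq_of_notMem _ _ _ hn, add_sub_cancel_left,
      mul_div_cancel_right₀ _ (Complex.exp_ne_zero _)]
  have hconst := Complex.isCoveringMap_exp.const_of_comp hhc
    (fun a b => by simp [hhe]) 0 (2 * Real.pi)
  simp only [h] at hconst
  push_cast at hconst
  rw [Complex.exp_two_pi_mul_I] at hconst
  have h0 : (2 * Real.pi * Complex.I : ℂ) = 0 := by
    simp at hconst
    linear_combination hconst
  exact Complex.two_pi_I_ne_zero h0

lemma HasLog.union {A B : Set ℂ} (hA : IsClosed A) (hB : IsClosed B) (hd : Disjoint A B) {p : ℂ}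
    (h1 : HasLog A p) (h2 : HasLog B p) : HasLog (A ∪ B) p := by
  classical
  obtain ⟨f, hf, hfe⟩ := h1
  obtain ⟨g, hg, hge⟩ := h2
  have hnA : ∀ z ∈ B, z ∉ A := fun z hz hz' => disjoint_left.1 hd hz' hz
  refine ⟨A.piecewise f g, ContinuousOn.union_of_isClosed ?_ ?_ hA hB, ?_⟩
  · exact hf.congr fun z hz => piecewise_eq_of_mem _ _ _ hz
  · exact hg.congr fun z hz => piecewise_eq_of_notMem _ _ _ (hnA z hz)
  · rintro z (hz | hz)
    · rw [piecewise_eq_of_mem _ _ _ hz, hfe z hz]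
    · rw [piecewise_eq_of_notMem _ _ _ (hnA z hz), hge z hz]

lemma comp_eq_aux {K L : Set ℂ} (h2 : L ⊆ (polyHull K)ᶜ) {p : ℂ} (hp : p ∈ (K ∪ L)ᶜ)
    (hb : Bornology.IsBounded (connectedComponentIn Kᶜ p)) :
    connectedComponentIn (K ∪ L)ᶜ p = connectedComponentIn Kᶜ p := by
  have hpK : p ∈ Kᶜ := fun h => hp (Or.inl h)
  apply Subset.antisymm
  · exact connectedComponentIn_mono _ (compl_subset_compl.2 subset_union_left)
  · refine isPreconnected_connectedComponentIn.subset_connectedComponentIn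
      (mem_connectedComponentIn hpK) ?_
    rintro z hz (hzK | hzL)
    · exact connectedComponentIn_subset _ _ hz hzK
    · refine h2 hzL (Or.inr ⟨connectedComponentIn_subset _ _ hz, ?_⟩)
      rwa [← connectedComponentIn_eq hz]

/-- Lemma `lem-union-omega-convex`, special case of Kallin's lemma. -/
theorem omegaConvex_union_of_polyHull_disjoint
    (Ω : Set ℂ) (hΩ : IsOpen Ω) (hΩconn : IsConnected Ω)
    (K L : Set ℂ) (hK : IsCompact K) (hL : IsCompact L)
    (hKΩ : K ⊆ Ω) (hLΩ : L ⊆ Ω)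
    (hKconv : OmegaConvex Ω K) (hLconv : OmegaConvex Ω L)
    (h1 : K ⊆ (polyHull L)ᶜ) (h2 : L ⊆ (polyHull K)ᶜ) :
    OmegaConvex Ω (K ∪ L) := by
  rintro C ⟨⟨p, hp, rfl⟩, hb⟩
  have hpK : p ∈ Kᶜ := fun h => hp (Or.inl h)
  have hpL : p ∈ Lᶜ := fun h => hp (Or.inr h)
  by_cases hbK : Bornology.IsBounded (connectedComponentIn Kᶜ p)
  · rw [comp_eq_aux h2 hp hbK]
    exact hKconv _ ⟨⟨p, hpK, rfl⟩, hbK⟩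
  by_cases hbL : Bornology.IsBounded (connectedComponentIn Lᶜ p)
  · rw [union_comm] at hp ⊢
    rw [comp_eq_aux h1 hp hbL]
    exact hLconv _ ⟨⟨p, hpL, rfl⟩, hbL⟩
  exfalso
  have hd : Disjoint K L := disjoint_left.2 fun z hzK hzL => h2 hzL (Or.inl hzK)
  exact not_hasLog_of_bounded (hK.isClosed.union hL.isClosed) hp hb
    ((hasLog_of_unbounded hK hpK hbK).union hK.isClosed hL.isClosed hd
      (hasLog_of_unbounded hL hpL hbL))
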